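/- arXiv:2408.07994 — 3 statements merged into one kernel-verified Lean document; each statement's English description precedes it below -/
import Mathlib

section
/- Let ρ_AB and σ_AB be density matrices on a finite-dimensional bipartite Hilbert space H_A ⊗ H_B, with σ_AB invertible, and let ρ_A, σ_A be their partial traces over H_B. Then S(ρ_AB‖σ_AB) ≥ S(ρ_A‖σ_A). -/
open Matrix ComplexOrder

/-- Partial trace over the second (B) factor. -/
noncomputable def ptraceB {dA dB : ℕ} (ρ : Matrix (Fin dA × Fin dB) (Fin dA × Fin dB) ℂ) :
    Matrix (Fin dA) (Fin dA) ℂ :=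
  fun i i' => ∑ j : Fin dB, ρ (i, j) (i', j)

/-- The matrix logarithm, via the continuous functional calculus. -/
noncomputable def matLog {n : Type*} [Fintype n] [DecidableEq n] (A : Matrix n n ℂ) :
    Matrix n n ℂ :=
  cfc Real.log A

/-- The quantum relative entropy `S(ρ‖σ) = Tr(ρ log ρ − ρ log σ)`. -/
noncomputable def relEnt {n : Type*} [Fintype n] [DecidableEq n] (ρ σ : Matrix n n ℂ) : ℂ :=
  (ρ * matLog ρ).trace - (ρ * matLog σ).trace

/-!
Write `L_σ` and `R_ρ` for left multiplication by `σ` and right multiplication by `ρ`. Since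
`p² / (q + tp)` is the `t`-derivative of `p log (q + tp)`, integrating the quasi-entropies
`⟨ρ, (L_σ + t R_ρ)⁻¹ ρ⟩` over `t ≥ 0` gives the relative entropy, up to a divergence `Tr(ρ) log t`
that only depends on the trace of `ρ`. It therefore suffices that each quasi-entropy decreases under
channels. Completing the square shows that it is the maximum over `Y` of
`2 Re Tr(ρY) - Tr(σYY†) - t Tr(ρY†Y)`, and by the Schwarz inequality this functional does not
decrease when the images of `ρ` and `σ` and the argument `Y` are replaced by `ρ`, `σ` and `Φ(Y)`,
where `Φ` is the adjoint of the channel; for the partial trace, `Φ(Y) = Y ⊗ 1`.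
-/

open Filter Topology
open scoped Kronecker MatrixOrder

section Trace

variable {𝕜 n : Type*} [RCLike 𝕜] [Fintype n]

lemma trace_mul_nonneg_of_posSemidef {A B : Matrix n n 𝕜} (hA : A.PosSemidef) (hB : B.PosSemidef) :
    0 ≤ (A * B).trace := by
  classical
  obtain ⟨C, rfl⟩ := CStarAlgebra.nonneg_iff_eq_star_mul_self.mp hB.nonneg
  rw [← Matrix.mul_assoc, trace_mul_comm, ← Matrix.mul_assoc]
  exact (hA.mul_mul_conjTranspose_same C).trace_nonneg

lemma trace_mul_le_trace_mul_of_posSemidef {A B C : Matrix n n 𝕜} (hA : A.PosSemidef)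
    (hBC : B ≤ C) : (A * B).trace ≤ (A * C).trace := by
  rw [← sub_nonneg, ← trace_sub, ← Matrix.mul_sub]
  exact trace_mul_nonneg_of_posSemidef hA hBC

lemma posSemidef_of_trace_mul_nonneg {A : Matrix n n ℂ}
    (h : ∀ B : Matrix n n ℂ, B.PosSemidef → 0 ≤ (A * B).trace) : A.PosSemidef := by
  classical
  rw [← isPositive_toEuclideanLin_iff, LinearMap.isPositive_iff_complex]
  intro x
  have hx := h _ (posSemidef_vecMulVec_self_star x.ofLp)
  rw [mul_vecMulVec, trace_vecMulVec] at hx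
  have hinner : inner ℂ (A.toEuclideanLin x) x = star (A *ᵥ x.ofLp ⬝ᵥ star x.ofLp) := by
    rw [EuclideanSpace.inner_eq_star_dotProduct, ofLp_toLpLin, toLin'_apply, ← star_dotProduct_star,
      star_star, dotProduct_comm]
  rw [hinner, (IsSelfAdjoint.of_nonneg hx).star_eq]
  exact ⟨(RCLike.nonneg_iff_exists_ofReal.mp hx).elim fun r hr ↦ by simp [← hr.2],
    (RCLike.nonneg_iff.mp hx).1⟩

end Trace

section Spectral

variable {𝕜 n : Type*} [RCLike 𝕜] [Fintype n] [DecidableEq n] {ρ σ : Matrix n n 𝕜}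

/-- The matrix of an operator `Y` with respect to the eigenbasis of `ρ` on its domain and the
eigenbasis of `σ` on its codomain. -/
noncomputable def eigenMatrix (hρ : ρ.IsHermitian) (hσ : σ.IsHermitian) (Y : Matrix n n 𝕜) :
    Matrix n n 𝕜 :=
  (hσ.eigenvectorUnitary : Matrix n n 𝕜)ᴴ * Y * hρ.eigenvectorUnitary

lemma conjTranspose_eigenMatrix (hρ : ρ.IsHermitian) (hσ : σ.IsHermitian) (Y : Matrix n n 𝕜) :
    (eigenMatrix hρ hσ Y)ᴴ = eigenMatrix hσ hρ Yᴴ := by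
  simp only [eigenMatrix, conjTranspose_mul, conjTranspose_conjTranspose, Matrix.mul_assoc]

lemma eigenMatrix_mul {τ : Matrix n n 𝕜} (hρ : ρ.IsHermitian) (hσ : σ.IsHermitian)
    (hτ : τ.IsHermitian) (X Y : Matrix n n 𝕜) :
    eigenMatrix hσ hτ X * eigenMatrix hρ hσ Y = eigenMatrix hρ hτ (X * Y) := by
  have hV : (hσ.eigenvectorUnitary : Matrix n n 𝕜) * (hσ.eigenvectorUnitary : Matrix n n 𝕜)ᴴ = 1 :=
    Unitary.coe_mul_star_self _
  simp only [eigenMatrix, Matrix.mul_assoc]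
  rw [← Matrix.mul_assoc (hσ.eigenvectorUnitary : Matrix n n 𝕜), hV, Matrix.one_mul]

lemma eigenMatrix_surjective (hρ : ρ.IsHermitian) (hσ : σ.IsHermitian) :
    Function.Surjective (eigenMatrix hρ hσ) := by
  intro Z
  have hU : (hρ.eigenvectorUnitary : Matrix n n 𝕜)ᴴ * hρ.eigenvectorUnitary = 1 :=
    Unitary.coe_star_mul_self _
  have hV : (hσ.eigenvectorUnitary : Matrix n n 𝕜)ᴴ * hσ.eigenvectorUnitary = 1 :=
    Unitary.coe_star_mul_self _
  refine ⟨hσ.eigenvectorUnitary * Z * (hρ.eigenvectorUnitary : Matrix n n 𝕜)ᴴ, ?_⟩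
  rw [eigenMatrix, ← Matrix.mul_assoc, ← Matrix.mul_assoc, hV, Matrix.one_mul, Matrix.mul_assoc, hU,
    Matrix.mul_one]

lemma trace_eigenMatrix_self (hρ : ρ.IsHermitian) (A : Matrix n n 𝕜) :
    (eigenMatrix hρ hρ A).trace = A.trace := by
  have hU : (hρ.eigenvectorUnitary : Matrix n n 𝕜) * (hρ.eigenvectorUnitary : Matrix n n 𝕜)ᴴ = 1 :=
    Unitary.coe_mul_star_self _
  rw [eigenMatrix, trace_mul_comm, ← Matrix.mul_assoc, hU, Matrix.one_mul]

lemma eigenMatrix_cfc_self (hρ : ρ.IsHermitian) (f : ℝ → ℝ) :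
    eigenMatrix hρ hρ (cfc f ρ) = diagonal fun i ↦ (f (hρ.eigenvalues i) : 𝕜) := by
  have hU : (hρ.eigenvectorUnitary : Matrix n n 𝕜)ᴴ * hρ.eigenvectorUnitary = 1 :=
    Unitary.coe_star_mul_self _
  rw [eigenMatrix, hρ.cfc_eq, IsHermitian.cfc, Unitary.conjStarAlgAut_apply]
  simp only [star_eq_conjTranspose, Matrix.mul_assoc, hU, Matrix.mul_one]
  rw [← Matrix.mul_assoc, hU, Matrix.one_mul]
  rfl

lemma trace_cfc_mul (hρ : ρ.IsHermitian) (f : ℝ → ℝ) (A : Matrix n n 𝕜) :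
    (cfc f ρ * A).trace = ∑ i, (f (hρ.eigenvalues i) : 𝕜) * eigenMatrix hρ hρ A i i := by
  rw [← trace_eigenMatrix_self hρ, ← eigenMatrix_mul hρ hρ hρ, eigenMatrix_cfc_self]
  simp only [trace, diag_apply, diagonal_mul]

lemma trace_mul_eq_sum_eigenvalues (hρ : ρ.IsHermitian) (A : Matrix n n 𝕜) :
    (ρ * A).trace = ∑ i, (hρ.eigenvalues i : 𝕜) * eigenMatrix hρ hρ A i i := by
  have hid : cfc (fun x : ℝ ↦ x) ρ = ρ := cfc_id' ℝ ρ hρ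
  simpa only [hid] using trace_cfc_mul hρ (fun x ↦ x) A

/-- The sum of `f p q` over pairs of eigenvalues `p` of `ρ` and `q` of `σ`, each pair weighted by
the squared overlap of its eigenvectors, an entry of the transition matrix `eigenMatrix hσ hρ 1`.
For `f p q = p * g p q` this is the expectation of `g` under the distribution that Nussbaum and
Szkoła attach to a pair of states. -/
noncomputable def spectralSum (hρ : ρ.IsHermitian) (hσ : σ.IsHermitian) (f : ℝ → ℝ → ℝ) : ℝ :=
  ∑ i, ∑ j, ‖eigenMatrix hσ hρ 1 i j‖ ^ 2 * f (hρ.eigenvalues i) (hσ.eigenvalues j)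

lemma spectralSum_sub (hρ : ρ.IsHermitian) (hσ : σ.IsHermitian) (f g : ℝ → ℝ → ℝ) :
    spectralSum hρ hσ (fun p q ↦ f p q - g p q) = spectralSum hρ hσ f - spectralSum hρ hσ g := by
  simp only [spectralSum, mul_sub, Finset.sum_sub_distrib]

lemma spectralSum_mul_const (hρ : ρ.IsHermitian) (hσ : σ.IsHermitian) (f : ℝ → ℝ → ℝ) (c : ℝ) :
    spectralSum hρ hσ (fun p q ↦ f p q * c) = spectralSum hρ hσ f * c := by
  simp only [spectralSum, Finset.sum_mul, mul_assoc]

lemma trace_cfc_mul_cfc (hρ : ρ.IsHermitian) (hσ : σ.IsHermitian) (f g : ℝ → ℝ) :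
    (cfc f ρ * cfc g σ).trace = (spectralSum hρ hσ (fun p q ↦ f p * g q) : 𝕜) := by
  have hfactor : eigenMatrix hρ hρ (cfc g σ) = eigenMatrix hσ hρ 1 *
      (diagonal fun j ↦ (g (hσ.eigenvalues j) : 𝕜)) * (eigenMatrix hσ hρ 1)ᴴ := by
    rw [conjTranspose_eigenMatrix, conjTranspose_one, ← eigenMatrix_cfc_self, eigenMatrix_mul,
      eigenMatrix_mul, Matrix.one_mul, Matrix.mul_one]
  rw [trace_cfc_mul hρ, hfactor, spectralSum]
  push_cast
  refine Finset.sum_congr rfl fun i _ ↦ ?_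
  rw [mul_apply, Finset.mul_sum]
  refine Finset.sum_congr rfl fun j _ ↦ ?_
  rw [mul_diagonal, conjTranspose_apply, ← RCLike.mul_conj, starRingEnd_apply]
  ring

lemma trace_eq_spectralSum (hρ : ρ.IsHermitian) (hσ : σ.IsHermitian) :
    ρ.trace = (spectralSum hρ hσ (fun p _ ↦ p) : 𝕜) := by
  have hid : cfc (fun x : ℝ ↦ x) ρ = ρ := cfc_id' ℝ ρ hρ
  have hone : cfc (fun _ : ℝ ↦ (1 : ℝ)) σ = 1 := cfc_const_one ℝ σ hσ
  simpa only [hid, hone, Matrix.mul_one, mul_one] using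
    trace_cfc_mul_cfc hρ hσ (fun p ↦ p) (fun _ ↦ 1)

lemma relEnt_eq_spectralSum {ρ σ : Matrix n n ℂ} (hρ : ρ.IsHermitian) (hσ : σ.IsHermitian) :
    relEnt ρ σ = (spectralSum hρ hσ (fun p q ↦ p * Real.log p - p * Real.log q) : ℂ) := by
  have hid : cfc (fun x : ℝ ↦ x) ρ = ρ := cfc_id' ℝ ρ hρ
  have hone : cfc (fun _ : ℝ ↦ (1 : ℝ)) σ = 1 := cfc_const_one ℝ σ hσ
  have hmul : cfc (fun x ↦ x * Real.log x) ρ = ρ * cfc Real.log ρ := by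
    rw [cfc_mul (fun x ↦ x) Real.log ρ continuousOn_id (ρ.finite_real_spectrum.continuousOn _), hid]
  have hρρ := trace_cfc_mul_cfc hρ hσ (fun p ↦ p * Real.log p) (fun _ ↦ 1)
  have hρσ := trace_cfc_mul_cfc hρ hσ (fun p ↦ p) Real.log
  simp only [hmul, hone, hid, mul_one] at hρρ hρσ
  rw [relEnt, matLog, matLog, hρρ, hρσ, spectralSum_sub]
  exact (Complex.ofReal_sub _ _).symm

end Spectral

section QuasiEntropy

variable {𝕜 n : Type*} [RCLike 𝕜] [Fintype n] {ρ σ : Matrix n n 𝕜}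

/-- The functional `Y ↦ 2 Re Tr(ρY) - Tr(σYY†) - t Tr(ρY†Y)`, whose maximum over `Y` is
`quasiEntropy`. -/
noncomputable def quasiEntropyFunctional (ρ σ : Matrix n n 𝕜) (t : ℝ) (Y : Matrix n n 𝕜) : ℝ :=
  2 * RCLike.re (ρ * Y).trace - RCLike.re (σ * (Y * Yᴴ)).trace -
    t * RCLike.re (ρ * (Yᴴ * Y)).trace

variable [DecidableEq n]

/-- The quasi-entropy `⟨ρ, (L_σ + t R_ρ)⁻¹ ρ⟩` in the Hilbert–Schmidt inner product, where `L_σ` and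
`R_ρ` are left and right multiplication, written in the joint eigenbasis of these two commuting
superoperators. By the convention `x / 0 = 0` the inverse is the Moore–Penrose one in the singular
case. -/
noncomputable def quasiEntropy (hρ : ρ.IsHermitian) (hσ : σ.IsHermitian) (t : ℝ) : ℝ :=
  spectralSum hρ hσ fun p q ↦ p ^ 2 / (q + t * p)

lemma quasiEntropyFunctional_eq_sum (hρ : ρ.IsHermitian) (hσ : σ.IsHermitian) (t : ℝ)
    (Y : Matrix n n 𝕜) :
    quasiEntropyFunctional ρ σ t Y = ∑ i, ∑ j,
      (2 * hρ.eigenvalues i * RCLike.re (eigenMatrix hσ hρ 1 i j * eigenMatrix hρ hσ Y j i) -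
        (hσ.eigenvalues j + t * hρ.eigenvalues i) * ‖eigenMatrix hρ hσ Y j i‖ ^ 2) := by
  have hlin : eigenMatrix hρ hρ Y = eigenMatrix hσ hρ 1 * eigenMatrix hρ hσ Y := by
    rw [eigenMatrix_mul, Matrix.one_mul]
  have hleft : eigenMatrix hσ hσ (Y * Yᴴ) = eigenMatrix hρ hσ Y * (eigenMatrix hρ hσ Y)ᴴ := by
    rw [conjTranspose_eigenMatrix, eigenMatrix_mul]
  have hright : eigenMatrix hρ hρ (Yᴴ * Y) = (eigenMatrix hρ hσ Y)ᴴ * eigenMatrix hρ hσ Y := by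
    rw [conjTranspose_eigenMatrix, eigenMatrix_mul]
  rw [quasiEntropyFunctional, trace_mul_eq_sum_eigenvalues hρ, trace_mul_eq_sum_eigenvalues hσ,
    trace_mul_eq_sum_eigenvalues hρ, hlin, hleft, hright]
  simp only [mul_apply, conjTranspose_apply, ← starRingEnd_apply, RCLike.mul_conj, RCLike.conj_mul,
    map_sum, RCLike.re_ofReal_mul, ← RCLike.ofReal_pow, RCLike.ofReal_re, Finset.mul_sum]
  rw [Finset.sum_comm (f := fun j i ↦ hσ.eigenvalues j * _)]
  simp only [← Finset.sum_sub_distrib]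
  refine Finset.sum_congr rfl fun i _ ↦ Finset.sum_congr rfl fun j _ ↦ ?_
  ring

lemma two_mul_re_sub_eq_sub_norm_sq {p m : ℝ} (hm : m ≠ 0) (w z : 𝕜) :
    2 * p * RCLike.re (w * z) - m * ‖z‖ ^ 2 =
      ‖w‖ ^ 2 * (p ^ 2 / m) - m * ‖z - (p / m : ℝ) * star w‖ ^ 2 := by
  simp only [← RCLike.normSq_eq_def', RCLike.normSq_apply, map_sub, RCLike.mul_re, RCLike.mul_im,
    RCLike.ofReal_re, RCLike.ofReal_im, RCLike.star_def, RCLike.conj_re, RCLike.conj_im]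
  field_simp
  ring

theorem isGreatest_quasiEntropy (hρ : ρ.PosSemidef) (hσ : σ.PosDef) {t : ℝ} (ht : 0 ≤ t) :
    IsGreatest (Set.range (quasiEntropyFunctional ρ σ t)) (quasiEntropy hρ.1 hσ.1 t) := by
  have hm (i j : n) : 0 < hσ.1.eigenvalues j + t * hρ.1.eigenvalues i :=
    add_pos_of_pos_of_nonneg (hσ.eigenvalues_pos j) (mul_nonneg ht (hρ.eigenvalues_nonneg i))
  constructor
  · obtain ⟨Y, hY⟩ := eigenMatrix_surjective hρ.1 hσ.1 <| of fun j i ↦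
      ((hρ.1.eigenvalues i / (hσ.1.eigenvalues j + t * hρ.1.eigenvalues i) : ℝ) : 𝕜) *
        star (eigenMatrix hσ.1 hρ.1 1 i j)
    refine ⟨Y, ?_⟩
    rw [quasiEntropyFunctional_eq_sum hρ.1 hσ.1, quasiEntropy, spectralSum]
    refine Finset.sum_congr rfl fun i _ ↦ Finset.sum_congr rfl fun j _ ↦ ?_
    rw [two_mul_re_sub_eq_sub_norm_sq (hm i j).ne', hY, of_apply, sub_self, norm_zero]
    ring
  · rintro _ ⟨Y, rfl⟩
    rw [quasiEntropyFunctional_eq_sum hρ.1 hσ.1]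
    refine Finset.sum_le_sum fun i _ ↦ Finset.sum_le_sum fun j _ ↦ ?_
    rw [two_mul_re_sub_eq_sub_norm_sq (hm i j).ne']
    exact sub_le_self _ (mul_nonneg (hm i j).le (sq_nonneg _))

end QuasiEntropy

section IntegralRepresentation

lemma hasDerivAt_mul_log_add_mul {p q t : ℝ} (h : q + t * p ≠ 0) :
    HasDerivAt (fun s ↦ p * (Real.log (q + s * p) - Real.log q)) (p ^ 2 / (q + t * p)) t := by
  have hlin : HasDerivAt (fun s : ℝ ↦ q + s * p) (1 * p) t :=
    ((hasDerivAt_id t).mul_const p).const_add q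
  refine (((hlin.log h).sub_const (Real.log q)).const_mul p).congr_deriv ?_
  ring

lemma tendsto_mul_log_add_mul_sub_mul_log {p : ℝ} (hp : 0 ≤ p) (q : ℝ) :
    Tendsto (fun t ↦ p * (Real.log (q + t * p) - Real.log q) - p * Real.log t) atTop
      (𝓝 (p * Real.log p - p * Real.log q)) := by
  rcases hp.eq_or_lt with rfl | hp
  · simp
  have hlim : Tendsto (fun t : ℝ ↦ q * t⁻¹ + p) atTop (𝓝 p) := by
    simpa using (tendsto_inv_atTop_zero.const_mul q).add_const p
  refine (((hlim.log hp.ne').const_mul p).sub_const (p * Real.log q)).congr' ?_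
  filter_upwards [eventually_gt_atTop 0, hlim.eventually_const_lt hp] with t ht hpos
  have hfactor : q + t * p = t * (q * t⁻¹ + p) := by field_simp
  rw [hfactor, Real.log_mul ht.ne' hpos.ne']
  ring

variable {𝕜 n : Type*} [RCLike 𝕜] [Fintype n] [DecidableEq n] {ρ σ : Matrix n n 𝕜}

/-- The closed form of the integral of `quasiEntropy hρ hσ` over `[0, t]`, which diverges like
`Tr(ρ) log t` and converges to the relative entropy once this divergence is subtracted. -/
noncomputable def truncatedRelEnt (hρ : ρ.IsHermitian) (hσ : σ.IsHermitian) (t : ℝ) : ℝ :=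
  spectralSum hρ hσ fun p q ↦ p * (Real.log (q + t * p) - Real.log q)

lemma truncatedRelEnt_zero (hρ : ρ.IsHermitian) (hσ : σ.IsHermitian) :
    truncatedRelEnt hρ hσ 0 = 0 := by
  simp [truncatedRelEnt, spectralSum]

lemma hasDerivAt_truncatedRelEnt (hρ : ρ.PosSemidef) (hσ : σ.PosDef) {t : ℝ} (ht : 0 ≤ t) :
    HasDerivAt (truncatedRelEnt hρ.1 hσ.1) (quasiEntropy hρ.1 hσ.1 t) t := by
  refine HasDerivAt.fun_sum fun i _ ↦ HasDerivAt.fun_sum fun j _ ↦ ?_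
  exact (hasDerivAt_mul_log_add_mul (add_pos_of_pos_of_nonneg (hσ.eigenvalues_pos j)
    (mul_nonneg ht (hρ.eigenvalues_nonneg i))).ne').const_mul _

lemma tendsto_truncatedRelEnt_sub (hρ : ρ.PosSemidef) (hσ : σ.IsHermitian) :
    Tendsto (fun t ↦ truncatedRelEnt hρ.1 hσ t - spectralSum hρ.1 hσ (fun p _ ↦ p) * Real.log t)
      atTop (𝓝 (spectralSum hρ.1 hσ fun p q ↦ p * Real.log p - p * Real.log q)) := by
  simp only [truncatedRelEnt, ← spectralSum_mul_const, ← spectralSum_sub]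
  exact tendsto_finsetSum _ fun i _ ↦ tendsto_finsetSum _ fun j _ ↦
    (tendsto_mul_log_add_mul_sub_mul_log (hρ.eigenvalues_nonneg i) _).const_mul _

variable {m : Type*} [Fintype m] [DecidableEq m]

lemma truncatedRelEnt_le_of_quasiEntropy_le {ρ' σ' : Matrix m m 𝕜}
    (hρ : ρ.PosSemidef) (hσ : σ.PosDef) (hρ' : ρ'.PosSemidef) (hσ' : σ'.PosDef)
    (hle : ∀ t, 0 ≤ t → quasiEntropy hρ'.1 hσ'.1 t ≤ quasiEntropy hρ.1 hσ.1 t)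
    {t : ℝ} (ht : 0 ≤ t) : truncatedRelEnt hρ'.1 hσ'.1 t ≤ truncatedRelEnt hρ.1 hσ.1 t := by
  have hderiv (s : ℝ) (hs : 0 ≤ s) := hasDerivAt_truncatedRelEnt hρ hσ hs
  have hderiv' (s : ℝ) (hs : 0 ≤ s) := hasDerivAt_truncatedRelEnt hρ' hσ' hs
  exact image_le_of_deriv_right_le_deriv_boundary
    (fun s hs ↦ (hderiv' s hs.1).continuousAt.continuousWithinAt)
    (fun s hs ↦ (hderiv' s hs.1).hasDerivWithinAt)
    (by rw [truncatedRelEnt_zero, truncatedRelEnt_zero])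
    (fun s hs ↦ (hderiv s hs.1).continuousAt.continuousWithinAt)
    (fun s hs ↦ (hderiv s hs.1).hasDerivWithinAt) (fun s hs ↦ hle s hs.1) ⟨ht, le_rfl⟩

theorem relEnt_le_of_quasiEntropy_le {ρ σ : Matrix n n ℂ} {ρ' σ' : Matrix m m ℂ}
    (hρ : ρ.PosSemidef) (hσ : σ.PosDef) (hρ' : ρ'.PosSemidef) (hσ' : σ'.PosDef)
    (htr : ρ'.trace = ρ.trace)
    (hle : ∀ t, 0 ≤ t → quasiEntropy hρ'.1 hσ'.1 t ≤ quasiEntropy hρ.1 hσ.1 t) :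
    relEnt ρ' σ' ≤ relEnt ρ σ := by
  rw [trace_eq_spectralSum hρ'.1 hσ'.1, trace_eq_spectralSum hρ.1 hσ.1] at htr
  rw [relEnt_eq_spectralSum hρ'.1 hσ'.1, relEnt_eq_spectralSum hρ.1 hσ.1, Complex.real_le_real]
  refine le_of_tendsto_of_tendsto (tendsto_truncatedRelEnt_sub hρ' hσ'.1)
    (tendsto_truncatedRelEnt_sub hρ hσ.1) ?_
  filter_upwards [eventually_ge_atTop 0] with t ht
  rw [RCLike.ofReal_injective htr]
  exact sub_le_sub_right (truncatedRelEnt_le_of_quasiEntropy_le hρ hσ hρ' hσ' hle ht) _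

end IntegralRepresentation

section SchwarzMap

variable {𝕜 m n : Type*} [RCLike 𝕜] [Fintype m] [DecidableEq m] [Fintype n] [DecidableEq n]

/-- A unital map between matrix algebras that satisfies the Kadison–Schwarz inequality, as does
the adjoint (Heisenberg picture) of every quantum channel. It is a predicate on bare functions, so
that it applies to bundled linear maps and to lambda-expressions alike. -/
structure IsUnitalSchwarzMap (Φ : Matrix m m 𝕜 → Matrix n n 𝕜) : Prop where
  map_one : Φ 1 = 1
  map_conjTranspose (Y : Matrix m m 𝕜) : Φ Yᴴ = (Φ Y)ᴴ
  conjTranspose_mul_self_le (Y : Matrix m m 𝕜) : (Φ Y)ᴴ * Φ Y ≤ Φ (Yᴴ * Y)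

namespace IsUnitalSchwarzMap

lemma self_mul_conjTranspose_le {Φ : Matrix m m 𝕜 → Matrix n n 𝕜} (hΦ : IsUnitalSchwarzMap Φ)
    (Y : Matrix m m 𝕜) : Φ Y * (Φ Y)ᴴ ≤ Φ (Y * Yᴴ) := by
  simpa only [hΦ.map_conjTranspose, conjTranspose_conjTranspose] using
    hΦ.conjTranspose_mul_self_le Yᴴ

lemma map_posSemidef {Φ : Matrix m m 𝕜 → Matrix n n 𝕜} (hΦ : IsUnitalSchwarzMap Φ)
    {A : Matrix m m 𝕜} (hA : A.PosSemidef) : (Φ A).PosSemidef := by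
  obtain ⟨Y, rfl⟩ := CStarAlgebra.nonneg_iff_eq_star_mul_self.mp hA.nonneg
  exact nonneg_iff_posSemidef.mp <|
    (posSemidef_conjTranspose_mul_self (Φ Y)).nonneg.trans (hΦ.conjTranspose_mul_self_le Y)

lemma quasiEntropyFunctional_le {Φ : Matrix m m 𝕜 → Matrix n n 𝕜} (hΦ : IsUnitalSchwarzMap Φ)
    {ρ σ : Matrix n n 𝕜} {ρ' σ' : Matrix m m 𝕜} (hρ : ρ.PosSemidef) (hσ : σ.PosSemidef)
    (hρ' : ∀ Y, (ρ' * Y).trace = (ρ * Φ Y).trace) (hσ' : ∀ Y, (σ' * Y).trace = (σ * Φ Y).trace)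
    {t : ℝ} (ht : 0 ≤ t) (Y : Matrix m m 𝕜) :
    quasiEntropyFunctional ρ' σ' t Y ≤ quasiEntropyFunctional ρ σ t (Φ Y) := by
  have hleft := RCLike.re_monotone <|
    trace_mul_le_trace_mul_of_posSemidef hσ (hΦ.self_mul_conjTranspose_le Y)
  have hright := RCLike.re_monotone <|
    trace_mul_le_trace_mul_of_posSemidef hρ (hΦ.conjTranspose_mul_self_le Y)
  rw [quasiEntropyFunctional, quasiEntropyFunctional, hρ', hσ', hρ']
  gcongr

lemma quasiEntropy_le {Φ : Matrix m m 𝕜 → Matrix n n 𝕜} (hΦ : IsUnitalSchwarzMap Φ)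
    {ρ σ : Matrix n n 𝕜} {ρ' σ' : Matrix m m 𝕜} (hρ : ρ.PosSemidef) (hσ : σ.PosDef)
    (hρ' : ρ'.PosSemidef) (hσ' : σ'.PosDef) (hρρ' : ∀ Y, (ρ' * Y).trace = (ρ * Φ Y).trace)
    (hσσ' : ∀ Y, (σ' * Y).trace = (σ * Φ Y).trace) {t : ℝ} (ht : 0 ≤ t) :
    quasiEntropy hρ'.1 hσ'.1 t ≤ quasiEntropy hρ.1 hσ.1 t := by
  obtain ⟨Y, hY⟩ := (isGreatest_quasiEntropy hρ' hσ' ht).1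
  rw [← hY]
  exact (hΦ.quasiEntropyFunctional_le hρ hσ.posSemidef hρρ' hσσ' ht Y).trans
    ((isGreatest_quasiEntropy hρ hσ ht).2 ⟨Φ Y, rfl⟩)

end IsUnitalSchwarzMap

lemma isUnitalSchwarzMap_kronecker_one :
    IsUnitalSchwarzMap fun Y : Matrix m m 𝕜 ↦ Y ⊗ₖ (1 : Matrix n n 𝕜) where
  map_one := one_kronecker_one
  map_conjTranspose Y := by rw [conjTranspose_kronecker, conjTranspose_one]
  conjTranspose_mul_self_le Y := by
    rw [conjTranspose_kronecker, conjTranspose_one, ← mul_kronecker_mul, Matrix.one_mul]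

/-- The states `ρ'`, `σ'` are the images of `ρ`, `σ` under the channel whose adjoint is `Φ`. -/
theorem relative_entropy_monotone_under_partial_trace_general
    {Φ : Matrix m m ℂ → Matrix n n ℂ} (hΦ : IsUnitalSchwarzMap Φ)
    {ρ σ : Matrix n n ℂ} {ρ' σ' : Matrix m m ℂ}
    (hρ : ρ.PosSemidef) (hσ : σ.PosDef) (hσ' : σ'.PosDef)
    (hρρ' : ∀ Y, (ρ' * Y).trace = (ρ * Φ Y).trace)
    (hσσ' : ∀ Y, (σ' * Y).trace = (σ * Φ Y).trace) :
    relEnt ρ' σ' ≤ relEnt ρ σ := by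
  have hρ' : ρ'.PosSemidef := posSemidef_of_trace_mul_nonneg fun A hA ↦ by
    rw [hρρ']
    exact trace_mul_nonneg_of_posSemidef hρ (hΦ.map_posSemidef hA)
  have htr : ρ'.trace = ρ.trace := by
    simpa only [hΦ.map_one, Matrix.mul_one] using hρρ' 1
  exact relEnt_le_of_quasiEntropy_le hρ hσ hρ' hσ' htr fun _ ht ↦
    hΦ.quasiEntropy_le hρ hσ hρ' hσ' hρρ' hσσ' ht

end SchwarzMap

section PartialTrace

variable {dA dB : ℕ}

lemma ptraceB_eq_sum_submatrix (ρ : Matrix (Fin dA × Fin dB) (Fin dA × Fin dB) ℂ) :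
    ptraceB ρ = ∑ j, ρ.submatrix (·, j) (·, j) := by
  ext i i'
  simp only [ptraceB, Matrix.sum_apply, submatrix_apply]

lemma posDef_ptraceB [NeZero dB] {σ : Matrix (Fin dA × Fin dB) (Fin dA × Fin dB) ℂ}
    (hσ : σ.PosDef) : (ptraceB σ).PosDef := by
  rw [ptraceB_eq_sum_submatrix]
  exact posDef_sum Finset.univ_nonempty fun j _ ↦ hσ.submatrix (Prod.mk_left_injective j)

lemma trace_ptraceB_mul (ρ : Matrix (Fin dA × Fin dB) (Fin dA × Fin dB) ℂ)
    (Y : Matrix (Fin dA) (Fin dA) ℂ) :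
    (ptraceB ρ * Y).trace = (ρ * Y ⊗ₖ (1 : Matrix (Fin dB) (Fin dB) ℂ)).trace := by
  simp only [trace, diag_apply, mul_apply, ptraceB, kronecker_apply, Fintype.sum_prod_type,
    one_apply, mul_ite, mul_one, mul_zero, Finset.sum_ite_eq', Finset.mem_univ, if_true,
    Finset.sum_mul]
  exact Finset.sum_congr rfl fun i _ ↦ Finset.sum_comm

end PartialTrace

/-- monotonicity of relative entropy under partial trace.
For density matrices `ρ_AB, σ_AB` on `H_A ⊗ H_B` with `σ_AB` invertible,
`S(ρ_AB ‖ σ_AB) ≥ S(ρ_A ‖ σ_A)` where `ρ_A, σ_A` are the partial traces over `H_B`. -/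
theorem relative_entropy_monotone_under_partial_trace {dA dB : ℕ}
    (ρ σ : Matrix (Fin dA × Fin dB) (Fin dA × Fin dB) ℂ)
    (hρ : ρ.PosSemidef) (hρ1 : ρ.trace = 1)
    (hσ : σ.PosSemidef) (hσ1 : σ.trace = 1) (hσu : IsUnit σ) :
    relEnt (ptraceB ρ) (ptraceB σ) ≤ relEnt ρ σ := by
  have hσd : σ.PosDef := hσ.posDef_iff_isUnit.mpr hσu
  have : NeZero dB := ⟨by rintro rfl; simp [trace] at hσ1⟩
  exact relative_entropy_monotone_under_partial_trace_general isUnitalSchwarzMap_kronecker_one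
    hρ hσd (posDef_ptraceB hσd) (trace_ptraceB_mul ρ) (trace_ptraceB_mul σ)
end

section
/- Let A and B be Hermitian matrices with A positive definite. Then d/ds log(A + sB) at s = 0 equals the integral ∫_0^∞ (A + u)^{-1} B (A + u)^{-1} du; in particular, Tr(ρ · d/ds log(A + sB)|_{s=0}) = Tr((∫_0^∞ (A+u)^{-1} ρ (A+u)^{-1} du) B) for any matrix ρ. -/
open Matrix MeasureTheory ComplexOrder

attribute [local instance] Matrix.frobeniusNormedAddCommGroup Matrix.frobeniusNormedSpace

/-! For `a` with positive spectrum, integrating `1 / x` along the segment from `1` to `a` gives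
`log a = ∫ t in 0..1, (a - 1) R t` with `R t = (1 + t (a - 1))⁻¹`, by the functional calculus. As
`t (a - 1) R t = 1 - R t`, the derivative of the integrand in the direction `b` is `R t * b * R t`,
and it may be taken under the integral because `[0, 1]` is compact. Finally `t = 1 / (1 + u)` turns
`R t` into `(1 + u) (a + u)⁻¹` and `dt` into `(1 + u)⁻² du`, so the weights cancel. -/

open Filter Set Function
open scoped Topology Ring Interval

section Segment

variable {𝕜 𝒜 : Type*} [Field 𝕜] [Ring 𝒜] [Algebra 𝕜 𝒜]

/-- The inverse of the point `(1 - t) • 1 + t • a` of the segment from `1` to `a`, with junk value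
`0` when that point is not a unit. It is the rescaled resolvent `(1 + u) • (a + u • 1)⁻¹` at
`t = (1 + u)⁻¹`. -/
noncomputable def segmentInverse (a : 𝒜) (t : 𝕜) : 𝒜 := (1 + t • (a - 1))⁻¹ʳ

lemma add_smul_one_eq_smul_segment (a : 𝒜) {u : 𝕜} (hu : 1 + u ≠ 0) :
    a + u • 1 = (1 + u) • (1 + (1 + u)⁻¹ • (a - 1)) := by
  rw [smul_add, smul_inv_smul₀ hu]
  module

lemma isUnit_add_smul_one_iff (a : 𝒜) {u : 𝕜} (hu : 1 + u ≠ 0) :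
    IsUnit (a + u • 1) ↔ IsUnit (1 + (1 + u)⁻¹ • (a - 1)) := by
  rw [add_smul_one_eq_smul_segment a hu]
  exact isUnit_smul_iff (Units.mk0 _ hu) _

lemma inverse_smul_of_ne_zero {c : 𝕜} (hc : c ≠ 0) (x : 𝒜) : (c • x)⁻¹ʳ = c⁻¹ • x⁻¹ʳ := by
  by_cases hx : IsUnit x
  · obtain ⟨x, rfl⟩ := hx
    exact Ring.inverse_unit (Units.mk0 c hc • x) |>.trans <| by simp [Units.smul_def]
  · have hcx : ¬ IsUnit (c • x) := (isUnit_smul_iff (Units.mk0 c hc) x).not.2 hx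
    rw [Ring.inverse_non_unit _ hx, Ring.inverse_non_unit _ hcx, smul_zero]

lemma inverse_add_smul_one (a : 𝒜) {u : 𝕜} (hu : 1 + u ≠ 0) :
    (a + u • 1)⁻¹ʳ = (1 + u)⁻¹ • segmentInverse a (1 + u)⁻¹ := by
  rw [add_smul_one_eq_smul_segment a hu, inverse_smul_of_ne_zero hu, segmentInverse]

lemma segmentInverse_eq_one_sub {a : 𝒜} {t : 𝕜} (h : IsUnit (1 + t • (a - 1))) :
    segmentInverse a t = 1 - t • ((a - 1) * segmentInverse a t) := by
  have hmul : (1 + t • (a - 1)) * segmentInverse a t = 1 := Ring.mul_inverse_cancel _ h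
  rw [add_mul, one_mul, smul_mul_assoc] at hmul
  exact eq_sub_of_add_eq hmul

lemma spectrum_subset_Ioi_zero_iff [LinearOrder 𝕜] [IsStrictOrderedRing 𝕜] {a : 𝒜} :
    spectrum 𝕜 a ⊆ Ioi 0 ↔ ∀ t ∈ Icc (0 : 𝕜) 1, IsUnit (1 + t • (a - 1)) := by
  have mem_spectrum_iff (u : 𝕜) : -u ∈ spectrum 𝕜 a ↔ ¬ IsUnit (a + u • 1) := by
    rw [spectrum.mem_iff, ← IsUnit.neg_iff, Algebra.algebraMap_eq_smul_one, neg_smul, neg_sub,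
      sub_neg_eq_add]
  constructor
  · rintro ha t ⟨ht₀, ht₁⟩
    obtain rfl | ht₀ := ht₀.eq_or_lt
    · simp
    have hu : 1 + (t⁻¹ - 1) = t⁻¹ := add_sub_cancel _ _
    rw [← inv_inv t, ← hu, ← isUnit_add_smul_one_iff a (by simp [hu, ht₀.ne'])]
    by_contra h
    have hneg : 0 < -(t⁻¹ - 1) := ha ((mem_spectrum_iff _).2 h)
    linarith [(one_le_inv₀ ht₀).2 ht₁]
  · intro ha r hr
    by_contra hr₀
    rw [mem_Ioi, not_lt] at hr₀
    have hu : 1 ≤ 1 + -r := by linarith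
    rw [← neg_neg r, mem_spectrum_iff, isUnit_add_smul_one_iff a (by linarith)] at hr
    exact hr (ha _ ⟨by positivity, inv_le_one_of_one_le₀ hu⟩)

lemma isUnit_segment_of_spectrum_subset [LinearOrder 𝕜] [IsStrictOrderedRing 𝕜] {a : 𝒜}
    (ha : spectrum 𝕜 a ⊆ Ioi 0) {t : 𝕜} (ht : t ∈ [[0, 1]]) : IsUnit (1 + t • (a - 1)) :=
  spectrum_subset_Ioi_zero_iff.1 ha t (by rwa [uIcc_of_le zero_le_one] at ht)

end Segment

section ParametricIntegral

lemma continuousOn_slice {X Y Z : Type*} [TopologicalSpace X] [TopologicalSpace Y]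
    [TopologicalSpace Z] {f : X → Y → Z} {U : Set (X × Y)} {K : Set Y} {x : X}
    (hf : ContinuousOn (uncurry f) U) (hx : ∀ y ∈ K, (x, y) ∈ U) : ContinuousOn (f x) K :=
  hf.comp (Continuous.prodMk_right x).continuousOn hx

variable {H E : Type*} [NormedAddCommGroup H] [NormedSpace ℝ H] [NormedAddCommGroup E]
  [NormedSpace ℝ E]

lemma hasFDerivAt_intervalIntegral_of_continuousOn {F : H → ℝ → E} {F' : H → ℝ → H →L[ℝ] E}
    {U : Set (H × ℝ)} {x₀ : H} {a b : ℝ} (hU : IsOpen U) (hx₀ : ∀ t ∈ [[a, b]], (x₀, t) ∈ U)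
    (hF : ContinuousOn (uncurry F) U) (hF' : ContinuousOn (uncurry F') U)
    (hderiv : ∀ p ∈ U, HasFDerivAt (F · p.2) (F' p.1 p.2) p.1) :
    HasFDerivAt (fun x ↦ ∫ t in a..b, F x t) (∫ t in a..b, F' x₀ t) x₀ := by
  obtain ⟨C, hC⟩ := isCompact_uIcc.exists_bound_of_continuousOn (continuousOn_slice hF' hx₀)
  have near : ∀ᶠ x in 𝓝 x₀, ∀ t ∈ [[a, b]], (x, t) ∈ U ∧ ‖F' x t‖ < C + 1 := by
    refine isCompact_uIcc.eventually_forall_of_forall_eventually fun t ht ↦ ?_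
    have hlt : ‖uncurry F' (x₀, t)‖ < C + 1 := (hC t ht).trans_lt (lt_add_one C)
    have hcont := hF'.continuousAt (hU.mem_nhds (hx₀ t ht))
    exact (hU.eventually_mem (hx₀ t ht)).and (hcont.norm.eventually_lt_const hlt)
  refine intervalIntegral.hasFDerivAt_integral_of_dominated_of_fderiv_le (bound := fun _ ↦ C + 1)
    near ?_ (continuousOn_slice hF hx₀).intervalIntegrable ?_ ?_ intervalIntegrable_const ?_
  · filter_upwards [near] with x hx
    exact ((continuousOn_slice hF fun t ht ↦ (hx t ht).1).mono uIoc_subset_uIcc)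
      |>.aestronglyMeasurable measurableSet_uIoc
  · exact ((continuousOn_slice hF' hx₀).mono uIoc_subset_uIcc).aestronglyMeasurable
      measurableSet_uIoc
  · exact .of_forall fun t ht x hx ↦ (hx t (uIoc_subset_uIcc ht)).2.le
  · exact .of_forall fun t ht x hx ↦ hderiv (x, t) (hx t (uIoc_subset_uIcc ht)).1

end ParametricIntegral

section Substitution

variable {E : Type*} [NormedAddCommGroup E] [NormedSpace ℝ E]

lemma image_inv_one_add_Ioi_zero : (fun u : ℝ ↦ (1 + u)⁻¹) '' Ioi 0 = Ioo 0 1 := by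
  ext t
  constructor
  · rintro ⟨u, hu, rfl⟩
    have hu : 0 < u := hu
    exact ⟨by positivity, inv_lt_one_of_one_lt₀ (by linarith)⟩
  · rintro ⟨ht₀, ht₁⟩
    exact ⟨t⁻¹ - 1, sub_pos.2 ((one_lt_inv₀ ht₀).2 ht₁), by simp⟩

lemma integral_Ioi_inv_one_add_sq_smul (g : ℝ → E) :
    ∫ u in Ioi (0 : ℝ), ((1 + u)⁻¹ ^ 2) • g (1 + u)⁻¹ = ∫ t in (0 : ℝ)..1, g t := by
  rw [intervalIntegral.integral_of_le zero_le_one, integral_Ioc_eq_integral_Ioo,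
    ← image_inv_one_add_Ioi_zero,
    integral_image_eq_integral_abs_deriv_smul (f' := fun u ↦ -(1 + u)⁻¹ ^ 2) measurableSet_Ioi]
  · simp
  · intro u hu
    have hu : 1 + u ≠ 0 := by linarith [mem_Ioi.1 hu]
    simpa [div_eq_mul_inv] using! (((hasDerivAt_id u).const_add 1).inv hu).hasDerivWithinAt
  · exact fun u _ v _ h ↦ add_left_cancel (inv_injective h)

end Substitution

section NormedAlgebra

variable {𝒜 : Type*} [NormedRing 𝒜] [NormedAlgebra ℝ 𝒜]

lemma setIntegral_inverse_mul_inverse (a b : 𝒜) :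
    ∫ u in Ioi (0 : ℝ), (a + u • 1)⁻¹ʳ * b * (a + u • 1)⁻¹ʳ =
      ∫ t in (0 : ℝ)..1, segmentInverse a t * b * segmentInverse a t := by
  rw [← integral_Ioi_inv_one_add_sq_smul]
  refine setIntegral_congr_fun measurableSet_Ioi fun u hu ↦ ?_
  have hu : 1 + u ≠ 0 := by linarith [mem_Ioi.1 hu]
  simp only [inverse_add_smul_one a hu, smul_mul_assoc, mul_smul_comm, smul_smul, sq]

variable [CompleteSpace 𝒜]

lemma isOpen_setOf_isUnit_segment : IsOpen {p : 𝒜 × ℝ | IsUnit (1 + p.2 • (p.1 - 1))} :=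
  Units.isOpen.preimage (by fun_prop)

lemma continuousOn_segmentInverse :
    ContinuousOn (uncurry segmentInverse) {p : 𝒜 × ℝ | IsUnit (1 + p.2 • (p.1 - 1))} := by
  rintro p ⟨x, hx⟩
  refine ContinuousAt.continuousWithinAt <|
    ContinuousAt.comp (f := fun p : 𝒜 × ℝ ↦ 1 + p.2 • (p.1 - 1)) ?_ (by fun_prop)
  rw [← hx]
  exact NormedRing.inverse_continuousAt x

lemma continuousOn_segmentInverse_right {a : 𝒜} (ha : spectrum ℝ a ⊆ Ioi 0) :
    ContinuousOn (segmentInverse a) [[(0 : ℝ), 1]] :=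
  continuousOn_slice continuousOn_segmentInverse fun _ ↦ isUnit_segment_of_spectrum_subset ha

lemma continuousOn_mulLeftRight_segmentInverse :
    ContinuousOn (uncurry fun (x : 𝒜) (t : ℝ) ↦
        ContinuousLinearMap.mulLeftRight ℝ 𝒜 (segmentInverse x t) (segmentInverse x t))
      {p | IsUnit (1 + p.2 • (p.1 - 1))} :=
  ((ContinuousLinearMap.mulLeftRight ℝ 𝒜).continuous.comp_continuousOn
    continuousOn_segmentInverse).clm_apply continuousOn_segmentInverse

lemma hasFDerivAt_segmentInverse {a : 𝒜} {t : ℝ} (h : IsUnit (1 + t • (a - 1))) :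
    HasFDerivAt (fun x : 𝒜 ↦ segmentInverse x t)
      (-t • ContinuousLinearMap.mulLeftRight ℝ 𝒜 (segmentInverse a t) (segmentInverse a t)) a := by
  have hsegment : HasFDerivAt (fun x : 𝒜 ↦ 1 + t • (x - 1)) (t • .id ℝ 𝒜) a :=
    (((hasFDerivAt_id a).sub_const 1).const_smul t).const_add 1
  have hinverse : HasFDerivAt Ring.inverse
      (-ContinuousLinearMap.mulLeftRight ℝ 𝒜 (segmentInverse a t) (segmentInverse a t))
      (1 + t • (a - 1)) := by
    obtain ⟨x, hx⟩ := h
    rw [segmentInverse, ← hx, Ring.inverse_unit]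
    exact hasFDerivAt_ringInverse x
  refine (hinverse.comp a hsegment).congr_fderiv ?_
  ext b
  simp

lemma hasFDerivAt_sub_one_mul_segmentInverse {a : 𝒜} {t : ℝ} (h : IsUnit (1 + t • (a - 1))) :
    HasFDerivAt (fun x : 𝒜 ↦ (x - 1) * segmentInverse x t)
      (ContinuousLinearMap.mulLeftRight ℝ 𝒜 (segmentInverse a t) (segmentInverse a t)) a := by
  refine (((hasFDerivAt_id a).sub_const 1).mul' (hasFDerivAt_segmentInverse h)).congr_fderiv ?_
  ext b
  set R := segmentInverse a t
  calc (a - 1) * (-t • (R * b * R)) + b * R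
    _ = (1 - t • ((a - 1) * R)) * b * R := by
      simp only [sub_mul, one_mul, smul_mul_assoc, mul_smul_comm, neg_smul, mul_neg, mul_assoc]
      abel
    _ = R * b * R := by rw [← segmentInverse_eq_one_sub h]

lemma hasFDerivAt_integral_sub_one_mul_segmentInverse {a : 𝒜} (ha : spectrum ℝ a ⊆ Ioi 0) :
    HasFDerivAt (fun x : 𝒜 ↦ ∫ t in (0 : ℝ)..1, (x - 1) * segmentInverse x t)
      (∫ t in (0 : ℝ)..1,
        ContinuousLinearMap.mulLeftRight ℝ 𝒜 (segmentInverse a t) (segmentInverse a t)) a := by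
  have hcont : ContinuousOn (uncurry fun (x : 𝒜) (t : ℝ) ↦ (x - 1) * segmentInverse x t)
      {p | IsUnit (1 + p.2 • (p.1 - 1))} :=
    ContinuousOn.mul (by fun_prop) continuousOn_segmentInverse
  exact hasFDerivAt_intervalIntegral_of_continuousOn (x₀ := a) (a := 0) (b := 1)
    isOpen_setOf_isUnit_segment (fun _ ↦ isUnit_segment_of_spectrum_subset ha) hcont
    continuousOn_mulLeftRight_segmentInverse
    fun _ hp ↦ hasFDerivAt_sub_one_mul_segmentInverse hp

lemma eventually_spectrum_subset_Ioi_zero {a : 𝒜} (ha : spectrum ℝ a ⊆ Ioi 0) :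
    ∀ᶠ x in 𝓝 a, spectrum ℝ x ⊆ Ioi 0 := by
  simp only [spectrum_subset_Ioi_zero_iff] at ha ⊢
  exact isCompact_Icc.eventually_forall_of_forall_eventually fun t ht ↦
    isOpen_setOf_isUnit_segment.mem_nhds (ha t ht)

end NormedAlgebra

section Log

lemma one_add_mul_sub_one_pos {x t : ℝ} (hx : 0 < x) (ht : t ∈ Icc 0 1) :
    0 < 1 + t * (x - 1) :=
  (convex_Ioi (0 : ℝ)).add_smul_sub_mem (mem_Ioi.2 one_pos) hx ht

lemma integral_sub_one_mul_inv_segment {x : ℝ} (hx : 0 < x) :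
    ∫ t in (0 : ℝ)..1, (x - 1) * (1 + t * (x - 1))⁻¹ = Real.log x := by
  have hne : ∀ t ∈ [[(0 : ℝ), 1]], 1 + t * (x - 1) ≠ 0 := fun t ht ↦
    (one_add_mul_sub_one_pos hx (by rwa [uIcc_of_le zero_le_one] at ht)).ne'
  have hderiv : ∀ t ∈ [[(0 : ℝ), 1]],
      HasDerivAt (fun t ↦ Real.log (1 + t * (x - 1))) ((x - 1) * (1 + t * (x - 1))⁻¹) t := by
    intro t ht
    simpa [div_eq_mul_inv] using!
      (((hasDerivAt_id t).mul_const (x - 1)).const_add 1).log (hne t ht)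
  have hcont : ContinuousOn (fun t ↦ (x - 1) * (1 + t * (x - 1))⁻¹) [[(0 : ℝ), 1]] := by
    fun_prop (disch := exact hne)
  rw [intervalIntegral.integral_eq_sub_of_hasDerivAt hderiv hcont.intervalIntegrable]
  simp

lemma cfc_intervalIntegral {𝕜 𝒜 : Type*} [RCLike 𝕜] {p : 𝒜 → Prop} [NormedRing 𝒜] [StarRing 𝒜]
    [NormedAlgebra 𝕜 𝒜] [NormedSpace ℝ 𝒜] [ContinuousFunctionalCalculus 𝕜 𝒜 p] [CompleteSpace 𝒜]
    {f : ℝ → 𝕜 → 𝕜} {s t : ℝ} (hst : s ≤ t) {a : 𝒜} (ha : p a)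
    (hf : ContinuousOn (uncurry f) (Icc s t ×ˢ spectrum 𝕜 a)) :
    cfc (fun z ↦ ∫ x in s..t, f x z) a = ∫ x in s..t, cfc (f x) a := by
  obtain ⟨C, hC⟩ := (isCompact_Icc.prod
    (ContinuousFunctionalCalculus.isCompact_spectrum a)).exists_bound_of_continuousOn hf
  simp only [intervalIntegral.integral_of_le hst]
  refine cfc_setIntegral measurableSet_Ioc f (fun _ ↦ C) a
    (hf.mono (prod_mono_left Ioc_subset_Icc_self)) ?_ (integrable_const C).2 ha
  exact ae_restrict_of_forall_mem measurableSet_Ioc fun x hx z hz ↦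
    hC (x, z) ⟨Ioc_subset_Icc_self hx, hz⟩

variable {𝒜 : Type*} [NormedRing 𝒜] [StarRing 𝒜] [NormedAlgebra ℝ 𝒜]
  [ContinuousFunctionalCalculus ℝ 𝒜 IsSelfAdjoint]

lemma cfc_sub_one_mul_inv_segment {a : 𝒜} (ha : IsSelfAdjoint a) {t : ℝ}
    (h : ∀ x ∈ spectrum ℝ a, 1 + t * (x - 1) ≠ 0) :
    cfc (fun x : ℝ ↦ (x - 1) * (1 + t * (x - 1))⁻¹) a = (a - 1) * segmentInverse a t := by
  have hcont : ContinuousOn (fun x : ℝ ↦ (1 + t * (x - 1))⁻¹) (spectrum ℝ a) := by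
    fun_prop (disch := exact h)
  have hsub : cfc (fun x : ℝ ↦ x - 1) a = a - 1 := by
    rw [cfc_sub (fun x ↦ x) (fun _ ↦ 1) a, cfc_id' ℝ a, cfc_const_one ℝ a]
  have hsegment : cfc (fun x : ℝ ↦ 1 + t * (x - 1)) a = 1 + t • (a - 1) := by
    rw [cfc_const_add 1 (fun x ↦ t * (x - 1)) a, cfc_const_mul t (fun x ↦ x - 1) a, hsub, map_one]
  rw [cfc_mul (fun x ↦ x - 1) _ a (by fun_prop) hcont, cfc_inv _ a h, hsub, hsegment,
    segmentInverse]

variable [CompleteSpace 𝒜]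

lemma log_eq_integral_sub_one_mul_segmentInverse {a : 𝒜} (ha : IsSelfAdjoint a)
    (hpos : spectrum ℝ a ⊆ Ioi 0) :
    CFC.log a = ∫ t in (0 : ℝ)..1, (a - 1) * segmentInverse a t := by
  have hne : ∀ p ∈ Icc (0 : ℝ) 1 ×ˢ spectrum ℝ a, 1 + p.1 * (p.2 - 1) ≠ 0 := fun p hp ↦
    (one_add_mul_sub_one_pos (hpos hp.2) hp.1).ne'
  have hcont : ContinuousOn (uncurry fun t x : ℝ ↦ (x - 1) * (1 + t * (x - 1))⁻¹)
      (Icc 0 1 ×ˢ spectrum ℝ a) := by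
    simp only [uncurry_def]
    fun_prop (disch := exact hne)
  calc CFC.log a
    _ = cfc (fun x : ℝ ↦ ∫ t in (0 : ℝ)..1, (x - 1) * (1 + t * (x - 1))⁻¹) a :=
      cfc_congr fun x hx ↦ (integral_sub_one_mul_inv_segment (hpos hx)).symm
    _ = ∫ t in (0 : ℝ)..1, cfc (fun x : ℝ ↦ (x - 1) * (1 + t * (x - 1))⁻¹) a :=
      cfc_intervalIntegral zero_le_one ha hcont
    _ = ∫ t in (0 : ℝ)..1, (a - 1) * segmentInverse a t := by
      refine intervalIntegral.integral_congr fun t ht ↦ ?_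
      rw [uIcc_of_le zero_le_one] at ht
      exact cfc_sub_one_mul_inv_segment ha fun x hx ↦ hne (t, x) ⟨ht, hx⟩

lemma hasDerivAt_log_add_smul {a b : 𝒜} (ha : IsSelfAdjoint a) (hb : IsSelfAdjoint b)
    (hpos : spectrum ℝ a ⊆ Ioi 0) :
    HasDerivAt (fun s : ℝ ↦ CFC.log (a + s • b))
      (∫ t in (0 : ℝ)..1, segmentInverse a t * b * segmentInverse a t) 0 := by
  have hline : HasDerivAt (fun s : ℝ ↦ a + s • b) b 0 := by
    simpa using! ((hasDerivAt_id (0 : ℝ)).smul_const b).const_add a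
  have hsmul (s : ℝ) : IsSelfAdjoint (s • b) := cfc_smul_id (R := ℝ) s b ▸ cfc_predicate _ b
  have hlog : ∀ᶠ s : ℝ in 𝓝 0, CFC.log (a + s • b) =
      ∫ t in (0 : ℝ)..1, (a + s • b - 1) * segmentInverse (a + s • b) t := by
    have htendsto : Tendsto (fun s : ℝ ↦ a + s • b) (𝓝 0) (𝓝 a) := by
      simpa using hline.continuousAt.tendsto
    filter_upwards [htendsto.eventually (eventually_spectrum_subset_Ioi_zero hpos)] with s hs
    exact log_eq_integral_sub_one_mul_segmentInverse (ha.add (hsmul s)) hs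
  have hint : IntervalIntegrable (fun t ↦ ContinuousLinearMap.mulLeftRight ℝ 𝒜
      (segmentInverse a t) (segmentInverse a t)) volume 0 1 :=
    (continuousOn_slice continuousOn_mulLeftRight_segmentInverse fun _ ↦
      isUnit_segment_of_spectrum_subset hpos).intervalIntegrable
  have hderiv := hasFDerivAt_integral_sub_one_mul_segmentInverse hpos
  refine (HasFDerivAt.comp_hasDerivAt_of_eq 0 hderiv hline (by simp)).congr_of_eventuallyEq hlog
    |>.congr_deriv ?_
  simp [ContinuousLinearMap.intervalIntegral_apply hint]

end Log

section Trace

variable {𝒜 E : Type*} [NormedRing 𝒜] [NormedAlgebra ℝ 𝒜] [CompleteSpace 𝒜]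
  [NormedAddCommGroup E] [NormedSpace ℝ E] [CompleteSpace E]

lemma apply_mul_integral_comm_of_tracial {a : 𝒜} (ha : spectrum ℝ a ⊆ Ioi 0) (τ : 𝒜 →L[ℝ] E)
    (hτ : ∀ x y, τ (x * y) = τ (y * x)) (b c : 𝒜) :
    τ (c * ∫ t in (0 : ℝ)..1, segmentInverse a t * b * segmentInverse a t) =
      τ ((∫ t in (0 : ℝ)..1, segmentInverse a t * c * segmentInverse a t) * b) := by
  have hR := continuousOn_segmentInverse_right ha
  have hint (x : 𝒜) : IntervalIntegrable (fun t ↦ segmentInverse a t * x * segmentInverse a t)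
      volume 0 1 :=
    ((hR.mul continuousOn_const).mul hR).intervalIntegrable
  have hleft := (τ ∘L .mul ℝ 𝒜 c).intervalIntegral_comp_comm (hint b)
  have hright := (τ ∘L (ContinuousLinearMap.mul ℝ 𝒜).flip b).intervalIntegral_comp_comm (hint c)
  simp only [ContinuousLinearMap.comp_apply, ContinuousLinearMap.flip_apply,
    ContinuousLinearMap.mul_apply'] at hleft hright
  rw [← hleft, ← hright]
  refine intervalIntegral.integral_congr fun t _ ↦ ?_
  set R := segmentInverse a t
  calc τ (c * (R * b * R)) = τ ((c * R * b) * R) := by simp only [mul_assoc]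
    _ = τ (R * c * R * b) := by rw [hτ]; simp only [mul_assoc]

end Trace

theorem deriv_matLog_integral_representation_general {𝒜 E : Type*} [NormedRing 𝒜] [StarRing 𝒜]
    [NormedAlgebra ℝ 𝒜] [CompleteSpace 𝒜] [hcfc : ContinuousFunctionalCalculus ℝ 𝒜 IsSelfAdjoint]
    [NormedAddCommGroup E] [NormedSpace ℝ E] [CompleteSpace E] {a b : 𝒜} (ha : IsSelfAdjoint a)
    (hpos : spectrum ℝ a ⊆ Ioi 0) (hb : IsSelfAdjoint b) (τ : 𝒜 →L[ℝ] E)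
    (hτ : ∀ x y, τ (x * y) = τ (y * x)) :
    HasDerivAt (fun s : ℝ ↦ CFC.log (a + s • b))
      (∫ u in Ioi (0 : ℝ), (a + u • 1)⁻¹ʳ * b * (a + u • 1)⁻¹ʳ) 0 ∧
    ∀ c : 𝒜, τ (c * ∫ u in Ioi (0 : ℝ), (a + u • 1)⁻¹ʳ * b * (a + u • 1)⁻¹ʳ) =
      τ ((∫ u in Ioi (0 : ℝ), (a + u • 1)⁻¹ʳ * c * (a + u • 1)⁻¹ʳ) * b) := by
  simp only [setIntegral_inverse_mul_inverse]
  exact ⟨hasDerivAt_log_add_smul ha hb hpos, apply_mul_integral_comm_of_tracial hpos τ hτ b⟩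

lemma spectrum_subset_Ioi_zero_of_posDef {n 𝕜 : Type*} [Fintype n] [DecidableEq n] [RCLike 𝕜]
    {A : Matrix n n 𝕜} (hA : A.PosDef) : spectrum ℝ A ⊆ Ioi 0 := by
  rw [hA.isHermitian.spectrum_real_eq_range_eigenvalues]
  rintro _ ⟨i, rfl⟩
  exact hA.eigenvalues_pos i

attribute [local instance] Matrix.frobeniusNormedRing Matrix.frobeniusNormedAlgebra

/-- integral representation of the derivative of the matrix logarithm.
For Hermitian `A, B` with `A` positive definite,
`d/ds log(A + sB)|_{s=0} = ∫_0^∞ (A+u)⁻¹ B (A+u)⁻¹ du`, and consequently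
`Tr(ρ · d/ds log(A+sB)|_{s=0}) = Tr((∫_0^∞ (A+u)⁻¹ ρ (A+u)⁻¹ du) · B)` for any matrix `ρ`. -/
theorem deriv_matLog_integral_representation {n : ℕ}
    (A B : Matrix (Fin n) (Fin n) ℂ)
    (hA : A.PosDef) (hB : B.IsHermitian) :
    HasDerivAt (fun s : ℝ => matLog (A + s • B))
      (∫ u in Set.Ioi (0 : ℝ),
        (A + u • (1 : Matrix (Fin n) (Fin n) ℂ))⁻¹ * B *
          (A + u • (1 : Matrix (Fin n) (Fin n) ℂ))⁻¹) 0 ∧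
    ∀ ρ : Matrix (Fin n) (Fin n) ℂ,
      (ρ * ∫ u in Set.Ioi (0 : ℝ),
          (A + u • (1 : Matrix (Fin n) (Fin n) ℂ))⁻¹ * B *
            (A + u • (1 : Matrix (Fin n) (Fin n) ℂ))⁻¹).trace =
        ((∫ u in Set.Ioi (0 : ℝ),
            (A + u • (1 : Matrix (Fin n) (Fin n) ℂ))⁻¹ * ρ *
              (A + u • (1 : Matrix (Fin n) (Fin n) ℂ))⁻¹) * B).trace := by
  simp only [nonsing_inv_eq_ringInverse]
  -- The functional calculus is stated for the product topology, which instance search does not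
  -- identify with the topology of the Frobenius norm; hence the explicit instance.
  exact deriv_matLog_integral_representation_general
    (hcfc := IsHermitian.instContinuousFunctionalCalculus) hA.isHermitian
    (spectrum_subset_Ioi_zero_of_posDef hA) hB
    (LinearMap.toContinuousLinearMap (traceLinearMap (Fin n) ℝ ℂ)) trace_mul_comm
end

section
/- Let A be a positive definite matrix with eigenvectors A|i⟩ = a_i|i⟩, and let B be a Hermitian matrix. Then for all i, j, ⟨i| (log(A+sB) − log A) |j⟩ = s ⟨i|B|j⟩ (log a_i − log a_j)/(a_i − a_j) + O(s²), with the convention that the difference quotient (log a_i − log a_j)/(a_i − a_j) equals 1/a_i when a_i = a_j. -/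
open Matrix Asymptotics

open Classical in
/-- The logarithmic difference quotient `(log a − log b)/(a − b)`, with the convention that it
equals `1/a` on the diagonal `a = b`. -/
noncomputable def logDiffQuot (a b : ℝ) : ℝ :=
  if a = b then 1 / a else (Real.log a - Real.log b) / (a - b)

open Filter Topology ComplexOrder

/-!
Newton interpolation gives `f x = f α + (x - α) f[α, β] + (x - α) (x - β) r x`, where the iterated
divided difference `r` is `dslope (dslope f α) β`. Apply this to `M = A + sB` and take the matrix
element between eigenvectors `u`, `w` of `A` with eigenvalues `α`, `β`. Since `(M - α) u = s B u`
and `(M - β) w = s B w`, the last term is exactly `s² ⟨B u| r(M) |B w⟩`. As `s → 0` the spectrum of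
`M` stays close to that of `A`, where `r` is continuous, so `r(M)` stays bounded.
-/

section DividedDifference

variable {E : Type*} [NormedAddCommGroup E]

theorem eq_add_smul_dslope_add_smul_dslope_dslope {𝕜 : Type*} [NontriviallyNormedField 𝕜]
    [NormedSpace 𝕜 E] (f : 𝕜 → E) (α β x : 𝕜) :
    f x = f α + (x - α) • dslope f α β +
      ((x - α) * (x - β)) • dslope (dslope f α) β x := by
  rw [mul_smul, sub_smul_dslope, smul_sub, sub_smul_dslope]
  abel

variable [NormedSpace ℝ E] {f : ℝ → E} {x : ℝ}

theorem exists_isLittleO_sub_taylor_two (hf : ContDiffAt ℝ 2 f x) :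
    ∃ c : E, (fun y => f y - (f x + (y - x) • deriv f x + (y - x) ^ 2 • c))
      =o[𝓝 x] fun y => (y - x) ^ 2 := by
  obtain ⟨u, hu, hfu⟩ := hf.contDiffOn le_rfl (by simp)
  obtain ⟨ε, hε, hball⟩ := Metric.mem_nhds_iff.1 hu
  have hnhds : Metric.ball x ε ∈ 𝓝 x := Metric.ball_mem_nhds x hε
  have hTaylor := taylor_isLittleO (n := 2) (convex_ball x ε) (Metric.mem_ball_self hε)
    (hfu.mono hball)
  rw [nhdsWithin_eq_nhds.2 hnhds] at hTaylor
  refine ⟨(2 : ℝ)⁻¹ • iteratedDerivWithin 2 f (Metric.ball x ε) x,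
    hTaylor.congr_left fun y => ?_⟩
  simp [taylorWithinEval_succ, iteratedDerivWithin_one, derivWithin_of_mem_nhds hnhds, smul_smul,
    mul_comm, one_add_one_eq_two]

theorem differentiableAt_dslope_same (hf : ContDiffAt ℝ 2 f x) :
    DifferentiableAt ℝ (dslope f x) x := by
  obtain ⟨c, hc⟩ := exists_isLittleO_sub_taylor_two hf
  refine HasDerivAt.differentiableAt (f' := c) (hasDerivAt_iff_isLittleO.2 ?_)
  refine ((isBigO_refl (fun y => (y - x)⁻¹) (𝓝 x)).smul_isLittleO hc).congr (fun y => ?_)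
    fun y => ?_
  · rcases eq_or_ne y x with rfl | hne
    · simp
    · have hyx : y - x ≠ 0 := sub_ne_zero.2 hne
      rw [dslope_same, dslope_of_ne f hne, slope_def_module]
      match_scalars <;> field_simp
  · rcases eq_or_ne y x with rfl | hne
    · simp
    · have hyx : y - x ≠ 0 := sub_ne_zero.2 hne
      rw [smul_eq_mul]
      field_simp

theorem continuousAt_dslope_dslope (hf : ContDiffAt ℝ 2 f x) (α β : ℝ) :
    ContinuousAt (dslope (dslope f α) β) x := by
  have hdiff : DifferentiableAt ℝ (dslope f α) x := by
    rcases eq_or_ne x α with rfl | hα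
    · exact differentiableAt_dslope_same hf
    · exact (differentiableAt_dslope_of_ne hα).2 (hf.differentiableAt two_ne_zero)
  rcases eq_or_ne x β with rfl | hβ
  · exact continuousAt_dslope_same.2 hdiff
  · exact (continuousAt_dslope_of_ne hβ).2 hdiff.continuousAt

end DividedDifference

section FunctionalCalculus

variable {𝕜 𝓐 : Type*} [RCLike 𝕜] {p : 𝓐 → Prop}

theorem cfc_eq_add_smul_add_mul_cfc_dslope_dslope_mul [Ring 𝓐] [StarRing 𝓐] [TopologicalSpace 𝓐]
    [Algebra 𝕜 𝓐] [ContinuousFunctionalCalculus 𝕜 𝓐 p] (f : 𝕜 → 𝕜) (α β : 𝕜) {a : 𝓐} (ha : p a)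
    (hcont : ContinuousOn (dslope (dslope f α) β) (spectrum 𝕜 a)) :
    cfc f a = algebraMap 𝕜 𝓐 (f α) + dslope f α β • (a - algebraMap 𝕜 𝓐 α) +
      (a - algebraMap 𝕜 𝓐 α) * cfc (dslope (dslope f α) β) a * (a - algebraMap 𝕜 𝓐 β) := by
  have hsub (γ : 𝕜) : cfc (fun x => x - γ) a = a - algebraMap 𝕜 𝓐 γ := by
    rw [cfc_sub .., cfc_id' .., cfc_const ..]
  have hNewton : f = fun x => f α + dslope f α β * (x - α) +
      (x - α) * dslope (dslope f α) β x * (x - β) := by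
    ext x
    rw [eq_add_smul_dslope_add_smul_dslope_dslope f α β x, smul_eq_mul, smul_eq_mul]
    ring
  conv_lhs => rw [hNewton]
  rw [cfc_add .., cfc_const_add .., cfc_const_mul .., cfc_mul .., cfc_mul .., hsub, hsub]

theorem isBigO_cfc_one [NormedRing 𝓐] [StarRing 𝓐] [NormedAlgebra 𝕜 𝓐] [CompleteSpace 𝓐]
    [IsometricContinuousFunctionalCalculus 𝕜 𝓐 p] {f : 𝕜 → 𝕜} {a : 𝓐}
    (hf : ∀ x ∈ spectrum 𝕜 a, ContinuousAt f x) :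
    (cfc f : 𝓐 → 𝓐) =O[𝓝 a] (fun _ => (1 : ℝ)) := by
  obtain ⟨C, hC⟩ := (spectrum.isCompact a).exists_bound_of_continuousOn
    fun x hx => (hf x hx).continuousWithinAt
  have hnear : ∀ᶠ x in 𝓝ˢ (spectrum 𝕜 a), ‖f x‖ ≤ |C| + 1 :=
    eventually_nhdsSet_iff_forall.2 fun x hx => (hf x hx).norm.eventually_le_const <| by
      linarith [hC x hx, le_abs_self C]
  have hspec := upperHemicontinuousAt_iff.1
    (upperHemicontinuous_iff.1 (upperHemicontinuous_spectrum 𝕜 𝓐) a) _ hnear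
  refine .of_bound (|C| + 1) (hspec.mono fun b hb => ?_)
  rw [norm_one, mul_one]
  exact norm_cfc_le (by positivity) fun x hx => subset_of_mem_nhdsSet hb hx

end FunctionalCalculus

section Perturbation

theorem star_dotProduct_mulVec_of_isHermitian {n R : Type*} [Fintype n] [NonUnitalSemiring R]
    [StarRing R] {M : Matrix n n R} (hM : M.IsHermitian) (u w : n → R) :
    star u ⬝ᵥ M *ᵥ w = star (M *ᵥ u) ⬝ᵥ w := by
  rw [star_mulVec, hM.eq, dotProduct_mulVec]

variable {n : Type*} [Fintype n] [DecidableEq n]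

theorem add_smul_sub_smul_one_mulVec {R S : Type*} [Ring R] [Monoid S] [DistribMulAction S R]
    [IsScalarTower S R R] {A : Matrix n n R} {α : S} {u : n → R} (hu : A *ᵥ u = α • u)
    (B : Matrix n n R) (s : S) :
    (A + s • B - α • 1) *ᵥ u = s • B *ᵥ u := by
  simp [sub_mulVec, add_mulVec, smul_mulVec, hu]

theorem star_dotProduct_cfc_add_smul_mulVec {𝕜 : Type*} [RCLike 𝕜] {A B : Matrix n n 𝕜}
    (hA : A.IsHermitian) (hB : B.IsHermitian) {α β : ℝ} {u w : n → 𝕜} (hu : A *ᵥ u = α • u)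
    (hw : A *ᵥ w = β • w) (f : ℝ → ℝ) (s : ℝ) :
    star u ⬝ᵥ cfc f (A + s • B) *ᵥ w =
      f α • (star u ⬝ᵥ w) + s • dslope f α β • (star u ⬝ᵥ B *ᵥ w) +
        s ^ 2 • (star (B *ᵥ u) ⬝ᵥ cfc (dslope (dslope f α) β) (A + s • B) *ᵥ (B *ᵥ w)) := by
  have hM : (A + s • B).IsHermitian := hA.add (hB.smul (.all s))
  have hMα : (A + s • B - α • 1).IsHermitian := hM.sub (isHermitian_one.smul (.all α))
  have hleft (x : n → 𝕜) : star u ⬝ᵥ (A + s • B - α • 1) *ᵥ x = s • (star (B *ᵥ u) ⬝ᵥ x) := by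
    rw [star_dotProduct_mulVec_of_isHermitian hMα, add_smul_sub_smul_one_mulVec hu, star_smul,
      star_trivial, smul_dotProduct]
  rw [cfc_eq_add_smul_add_mul_cfc_dslope_dslope_mul f α β hM.isSelfAdjoint
    (finite_real_spectrum.continuousOn _)]
  simp only [Algebra.algebraMap_eq_smul_one, add_mulVec, dotProduct_add, smul_mulVec,
    dotProduct_smul, ← mulVec_mulVec, hleft, add_smul_sub_smul_one_mulVec hw, mulVec_smul,
    star_dotProduct_mulVec_of_isHermitian hB, one_mulVec]
  module

theorem star_dotProduct_cfc_add_smul_mulVec_sub_sub {𝕜 : Type*} [RCLike 𝕜] {A B : Matrix n n 𝕜}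
    (hA : A.IsHermitian) (hB : B.IsHermitian) {α β : ℝ} {u w : n → 𝕜} (hu : A *ᵥ u = α • u)
    (hw : A *ᵥ w = β • w) (f : ℝ → ℝ) (s : ℝ) :
    star u ⬝ᵥ cfc f (A + s • B) *ᵥ w - star u ⬝ᵥ cfc f A *ᵥ w -
        s • dslope f α β • (star u ⬝ᵥ B *ᵥ w) =
      s ^ 2 • (star (B *ᵥ u) ⬝ᵥ cfc (dslope (dslope f α) β) (A + s • B) *ᵥ (B *ᵥ w)) := by
  have hzero : star u ⬝ᵥ cfc f A *ᵥ w = f α • (star u ⬝ᵥ w) := by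
    simpa using star_dotProduct_cfc_add_smul_mulVec hA hB hu hw f 0
  rw [hzero, star_dotProduct_cfc_add_smul_mulVec hA hB hu hw]
  abel

open scoped Matrix.Norms.L2Operator in
theorem isBigO_dotProduct_mulVec {𝕜 m ι : Type*} [RCLike 𝕜] [Fintype m]
    (u : m → 𝕜) (w : n → 𝕜) (F : ι → Matrix m n 𝕜) (l : Filter ι) :
    (fun x => u ⬝ᵥ F x *ᵥ w) =O[l] F := by
  classical
  let L : Matrix m n 𝕜 →ₗ[𝕜] 𝕜 :=
    LinearMap.applyₗ w ∘ₗ LinearMap.applyₗ u ∘ₗ (toLinearMap₂' 𝕜).toLinearMap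
  simpa [L, toLinearMap₂'_apply'] using (LinearMap.toContinuousLinearMap L).isBigO_comp F l

open scoped Matrix.Norms.L2Operator in
theorem isBigO_star_dotProduct_cfc_add_smul_mulVec_sub_sub {A B : Matrix n n ℂ}
    (hA : A.IsHermitian) (hB : B.IsHermitian) {α β : ℝ} {u w : n → ℂ} (hu : A *ᵥ u = α • u)
    (hw : A *ᵥ w = β • w) {f : ℝ → ℝ} (hf : ∀ x ∈ spectrum ℝ A, ContDiffAt ℝ 2 f x) :
    (fun s : ℝ => star u ⬝ᵥ cfc f (A + s • B) *ᵥ w - star u ⬝ᵥ cfc f A *ᵥ w -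
        s • dslope f α β • (star u ⬝ᵥ B *ᵥ w)) =O[𝓝 0] fun s => s ^ 2 := by
  have hpath : Tendsto (fun s : ℝ => A + s • B) (𝓝 0) (𝓝 A) :=
    Continuous.tendsto' (by fun_prop) 0 A (by simp)
  have hbound : (fun s : ℝ => star (B *ᵥ u) ⬝ᵥ
      cfc (dslope (dslope f α) β) (A + s • B) *ᵥ (B *ᵥ w)) =O[𝓝 0] fun _ => (1 : ℝ) :=
    (isBigO_dotProduct_mulVec _ _ _ _).trans <|
      (isBigO_cfc_one fun x hx => continuousAt_dslope_dslope (hf x hx) α β).comp_tendsto hpath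
  simp only [star_dotProduct_cfc_add_smul_mulVec_sub_sub hA hB hu hw]
  simpa only [smul_eq_mul, mul_one] using (isBigO_refl (fun s : ℝ => s ^ 2) (𝓝 0)).smul hbound

theorem posDef_of_orthonormal_eigenvectors {𝕜 : Type*} [RCLike 𝕜] {A : Matrix n n 𝕜} {a : n → ℝ}
    {v : n → n → 𝕜} (ha : ∀ i, 0 < a i) (heig : ∀ i, A *ᵥ v i = (a i : 𝕜) • v i)
    (horth : ∀ i j, star (v i) ⬝ᵥ v j = if i = j then 1 else 0) : A.PosDef := by
  let V : Matrix n n 𝕜 := (of v)ᵀ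
  have hV : star V * V = 1 := by
    ext i j
    rw [one_apply]
    exact horth i j
  have hAV : A * V = V * diagonal (fun i => (a i : 𝕜)) := by
    ext k i
    rw [mul_diagonal, mul_comm]
    exact congrFun (heig i) k
  rw [← (IsUnit.of_mul_eq_one_right _ hV).posDef_star_left_conjugate_iff, mul_assoc, hAV,
    ← mul_assoc, hV, one_mul, posDef_diagonal_iff]
  exact fun i => RCLike.ofReal_pos.2 (ha i)

theorem logDiffQuot_eq_dslope (a b : ℝ) : logDiffQuot a b = dslope Real.log a b := by
  rcases eq_or_ne a b with rfl | hab
  · simp [logDiffQuot]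
  · rw [logDiffQuot, if_neg hab, dslope_of_ne _ hab.symm, slope_comm, slope_def_field]

theorem matLog_first_order_perturbation_eigenbasis_general {A B : Matrix n n ℂ}
    (hA : A.PosDef) (hB : B.IsHermitian) {α β : ℝ} {u w : n → ℂ} (hu : A *ᵥ u = (α : ℂ) • u)
    (hw : A *ᵥ w = (β : ℂ) • w) :
    (fun s : ℝ => star u ⬝ᵥ matLog (A + s • B) *ᵥ w - star u ⬝ᵥ matLog A *ᵥ w -
        (s : ℂ) * (star u ⬝ᵥ B *ᵥ w) * (logDiffQuot α β : ℂ)) =O[𝓝 0] fun s => s ^ 2 := by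
  have hlog : ∀ x ∈ spectrum ℝ A, ContDiffAt ℝ 2 Real.log x := by
    rw [hA.isHermitian.spectrum_real_eq_range_eigenvalues]
    rintro _ ⟨k, rfl⟩
    exact Real.contDiffAt_log.2 (hA.eigenvalues_pos k).ne'
  rw [Complex.coe_smul] at hu hw
  refine (isBigO_star_dotProduct_cfc_add_smul_mulVec_sub_sub hA.isHermitian hB hu hw
    hlog).congr_left fun s => ?_
  rw [logDiffQuot_eq_dslope, Complex.real_smul, Complex.real_smul, matLog, matLog]
  ring

end Perturbation

/-- first-order perturbation of the matrix logarithm in an eigenbasis.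
Let `A` be positive definite Hermitian with orthonormal eigenbasis `v i` and eigenvalues
`a i > 0`, and let `B` be Hermitian. Then
`⟨i|(log(A+sB) − log A)|j⟩ = s ⟨i|B|j⟩ (log a_i − log a_j)/(a_i − a_j) + O(s²)`,
with the convention that the difference quotient is `1/a_i` when `a_i = a_j`. -/
theorem matLog_first_order_perturbation_eigenbasis {n : ℕ}
    (A B : Matrix (Fin n) (Fin n) ℂ)
    (hA : A.IsHermitian) (hB : B.IsHermitian)
    (a : Fin n → ℝ) (v : Fin n → (Fin n → ℂ))
    (ha : ∀ i, 0 < a i)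
    (heig : ∀ i, A.mulVec (v i) = (a i : ℂ) • v i)
    (horth : ∀ i j, star (v i) ⬝ᵥ v j = if i = j then 1 else 0)
    (i j : Fin n) :
    (fun s : ℝ =>
        star (v i) ⬝ᵥ (matLog (A + s • B)).mulVec (v j) -
          star (v i) ⬝ᵥ (matLog A).mulVec (v j) -
          (s : ℂ) * (star (v i) ⬝ᵥ B.mulVec (v j)) * (logDiffQuot (a i) (a j) : ℂ))
      =O[nhds 0] (fun s : ℝ => s ^ 2) :=
  matLog_first_order_perturbation_eigenbasis_general
    (posDef_of_orthonormal_eigenvectors ha heig horth) hB (heig i) (heig j)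
end
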